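/- Let d ∈ ℕ and let (X_i)_{i∈ℕ} be a strictly stationary sequence of S_d-valued random vectors with marginal density f on S_d, strong mixing coefficient α(m) ≪ m^{−ν} for some ν > 1, and fix s ∈ Int(S_d) and b = b(n) → 0. Let (p_n), (q_n) be positive integer sequences diverging to ∞, k_n = ⌊n/(p_n+q_n)⌋, and for j ∈ {1,…,k_n} let V_j(s) = Σ_{i ∈ J_j} Ξ_{i,n}(s), where J_j = {(j−1)(p_n+q_n)+p_n+1, …, j(p_n+q_n)} is the j-th small block and Ξ_{i,n}(s) = κ_{s,b}(X_i) − E{κ_{s,b}(X_i)}. If p_n/(p_n+q_n) → 1, then Σ_{1 ≤ i < j ≤ k_n} |E{V_i(s) V_j(s)}| ≪_s k_n (q_n b^{−d/2})² / (p_n + q_n)^ν as n → ∞. -/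

import Mathlib

open MeasureTheory Filter Asymptotics Real Topology

noncomputable section

/-- The `d`-dimensional simplex `S_d = {s ∈ [0,1]^d : ‖s‖₁ ≤ 1}`. -/
def Sd (d : ℕ) : Set (Fin d → ℝ) :=
  {s | (∀ i, s i ∈ Set.Icc (0 : ℝ) 1) ∧ ∑ i, |s i| ≤ 1}

/-- The interior of the simplex, `Int(S_d) = {s ∈ (0,1)^d : ‖s‖₁ < 1}`. -/
def SdInt (d : ℕ) : Set (Fin d → ℝ) :=
  {s | (∀ i, s i ∈ Set.Ioo (0 : ℝ) 1) ∧ ∑ i, |s i| < 1}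

/-- The Dirichlet(u, v) density on the simplex, evaluated at `x`. -/
def dirK (d : ℕ) (u : Fin d → ℝ) (v : ℝ) (x : Fin d → ℝ) : ℝ :=
  (Real.Gamma (∑ i, u i + v) / (Real.Gamma v * ∏ i, Real.Gamma (u i))) *
    (1 - ∑ i, x i) ^ (v - 1) * ∏ i, (x i) ^ (u i - 1)

/-- The Dirichlet kernel `κ_{s,b} = K_{s/b+1, (1-‖s‖₁)/b+1}`. -/
def kappa (d : ℕ) (s : Fin d → ℝ) (b : ℝ) (x : Fin d → ℝ) : ℝ :=
  dirK d (fun i => s i / b + 1) ((1 - ∑ i, s i) / b + 1) x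

/-- `ψ(s) = (4π)^{-d/2} / ((1-‖s‖₁)^{1/2} ∏ s_i^{1/2})`. -/
def psiFun (d : ℕ) (s : Fin d → ℝ) : ℝ :=
  (4 * π) ^ (-(d : ℝ) / 2) /
    ((1 - ∑ i, s i) ^ ((1 : ℝ) / 2) * ∏ i, (s i) ^ ((1 : ℝ) / 2))

/-- The Dirichlet kernel density estimator `f̂_{n,b}(s)`. -/
def fhat {Ω : Type*} (d n : ℕ) (b : ℝ) (X : ℕ → Ω → (Fin d → ℝ))
    (s : Fin d → ℝ) (ω : Ω) : ℝ :=
  (n : ℝ)⁻¹ * ∑ i ∈ Finset.Icc 1 n, kappa d s b (X i ω)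

/-- The strong mixing (α-mixing) coefficient of the sequence `X`. -/
def alphaMix {Ω : Type*} [MeasurableSpace Ω] (P : Measure Ω)
    {d : ℕ} (X : ℕ → Ω → (Fin d → ℝ)) (m : ℕ) : ℝ :=
  sSup {r : ℝ | ∃ k : ℕ, 1 ≤ k ∧ ∃ A B : Set Ω,
    MeasurableSet[⨆ i ∈ Set.Icc 1 k, MeasurableSpace.comap (X i) inferInstance] A ∧
    MeasurableSet[⨆ i ∈ Set.Ici (k + m), MeasurableSpace.comap (X i) inferInstance] B ∧
    r = |(P (A ∩ B)).toReal - (P A).toReal * (P B).toReal|}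

/-- Strict stationarity of the sequence `X` (indexed from 1). -/
def IsStrictlyStationary {Ω : Type*} [MeasurableSpace Ω] (P : Measure Ω)
    {d : ℕ} (X : ℕ → Ω → (Fin d → ℝ)) : Prop :=
  ∀ k n : ℕ,
    Measure.map (fun ω => fun t : Fin n => X (t.1 + 1 + k) ω) P =
      Measure.map (fun ω => fun t : Fin n => X (t.1 + 1) ω) P

/-- Covariance of two real random variables. -/
def cov {Ω : Type*} [MeasurableSpace Ω] (P : Measure Ω) (Y Z : Ω → ℝ) : ℝ :=
  ∫ ω, Y ω * Z ω ∂P - (∫ ω, Y ω ∂P) * (∫ ω, Z ω ∂P)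

/-- The bias functional `g(s)` from Theorem MSE. -/
def gfun (d : ℕ) (f : (Fin d → ℝ) → ℝ) (s : Fin d → ℝ) : ℝ :=
  (∑ i, (1 - ((d : ℝ) + 1) * s i) * fderiv ℝ f s (Pi.single i 1)) +
    (1 / 2) * ∑ i, ∑ j, s i * ((if i = j then (1 : ℝ) else 0) - s j) *
      fderiv ℝ (fun t => fderiv ℝ f t (Pi.single i 1)) s (Pi.single j 1)

/-- The centered kernel variable `Ξ_{i,n}(s)`. -/
def Xi {Ω : Type*} [MeasurableSpace Ω] (P : Measure Ω) {d : ℕ}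
    (X : ℕ → Ω → (Fin d → ℝ)) (s : Fin d → ℝ) (b : ℝ) (i : ℕ) (ω : Ω) : ℝ :=
  kappa d s b (X i ω) - ∫ ω', kappa d s b (X i ω') ∂P

/-- The `j`-th big block of indices `I_j`. -/
def bigBlock (pn qn j : ℕ) : Finset ℕ :=
  Finset.Icc ((j - 1) * (pn + qn) + 1) ((j - 1) * (pn + qn) + pn)

/-- The `j`-th small block of indices `J_j`. -/
def smallBlock (pn qn j : ℕ) : Finset ℕ :=
  Finset.Icc ((j - 1) * (pn + qn) + pn + 1) (j * (pn + qn))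

/-- Assumption (A2): pairwise joint densities exist and the local dependence
functions `h_{i,j} = f_{X_i,X_j} - f_{X_i} f_{X_j}` have uniformly bounded `L^p` norms. -/
def AssumpA2 {Ω : Type*} [MeasurableSpace Ω] (P : Measure Ω) {d : ℕ}
    (X : ℕ → Ω → (Fin d → ℝ)) (f : (Fin d → ℝ) → ℝ) (p : ℝ) : Prop :=
  ∃ fpair : ℕ → ℕ → ((Fin d → ℝ) × (Fin d → ℝ)) → ℝ,
    (∀ i j : ℕ, 1 ≤ i → 1 ≤ j → i ≠ j →
      Measure.map (fun ω => (X i ω, X j ω)) P =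
        volume.withDensity (fun z => ENNReal.ofReal (fpair i j z))) ∧
    (∀ i j : ℕ, 1 ≤ i → 1 ≤ j → i ≠ j →
      Integrable (fun z => |fpair i j z - f z.1 * f z.2| ^ p)
        (volume.restrict (Sd d ×ˢ Sd d))) ∧
    ∃ C : ℝ, ∀ i j : ℕ, 1 ≤ i → 1 ≤ j → i ≠ j →
      (∫ z in Sd d ×ˢ Sd d, |fpair i j z - f z.1 * f z.2| ^ p) ^ (1 / p) ≤ C

/-- Stirling ratio `R(z) = √(2π) e^{-z} z^{z+1/2} / Γ(z+1)`. -/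
def Rfun (z : ℝ) : ℝ :=
  Real.sqrt (2 * π) * Real.exp (-z) * z ^ (z + 1 / 2) / Real.Gamma (z + 1)

end


theorem sb_logGamma_bounds (z : ℝ) (hz : 1 ≤ z) :
    (z + 1/2) * Real.log z - z - 3 ≤ Real.log (Real.Gamma (z + 1)) ∧
    Real.log (Real.Gamma (z + 1)) ≤ (z + 1/2) * Real.log z - z + 3 := by
  obtain ⟨n, t, hn, ht0, ht1, rfl⟩ : ∃ (n : ℕ) (t : ℝ), 1 ≤ n ∧ 0 ≤ t ∧ t ≤ 1 ∧ z = n + t := by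
    refine ⟨⌊z⌋₊, z - ⌊z⌋₊, Nat.le_floor (by simpa using hz), ?_, ?_, by ring⟩
    · have := Nat.floor_le (by linarith : (0:ℝ) ≤ z); linarith
    · have := Nat.lt_floor_add_one z; linarith
  have hn0 : (0:ℝ) < n := by exact_mod_cast hn
  have hn1 : (1:ℝ) ≤ n := by exact_mod_cast hn
  have hfeq : ∀ {y : ℝ}, 0 < y →
      (Real.log ∘ Real.Gamma) (y + 1) = (Real.log ∘ Real.Gamma) y + Real.log y := by
    intro y hy
    simp only [Function.comp]
    rw [Real.Gamma_add_one hy.ne', Real.log_mul hy.ne' (Real.Gamma_pos_of_pos hy).ne', add_comm]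
  have hG : Real.log (Real.Gamma ((n + 1 : ℕ) : ℝ)) = Real.log (n.factorial : ℝ) := by
    push_cast
    rw [Real.Gamma_nat_eq_factorial]
  have hup : Real.log (Real.Gamma (n + t + 1)) ≤ Real.log (n.factorial : ℝ) + t * Real.log (n + 1) := by
    rcases ht0.eq_or_lt with h | h
    · subst h
      rw [← hG]; push_cast; simp
    · have := Real.BohrMollerup.f_add_nat_le (n := n + 1) Real.convexOn_log_Gamma hfeq
        (by omega) h ht1
      simp only [Function.comp] at this
      rw [hG] at this
      push_cast at this
      rwa [show (n:ℝ) + t + 1 = n + 1 + t by ring]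
  have hlo : Real.log (n.factorial : ℝ) + t * Real.log n ≤ Real.log (Real.Gamma (n + t + 1)) := by
    rcases ht0.eq_or_lt with h | h
    · subst h
      rw [← hG]; push_cast; simp
    · have := Real.BohrMollerup.f_add_nat_ge (n := n + 1) Real.convexOn_log_Gamma hfeq
        (by omega) h
      simp only [Function.comp] at this
      rw [hG] at this
      push_cast at this
      rw [show (n:ℝ) + 1 - 1 = n by ring] at this
      rwa [show (n:ℝ) + t + 1 = n + 1 + t by ring]
  have hfl := Stirling.le_log_factorial_stirling (n := n) (by omega)
  have hfu : Real.log (n.factorial : ℝ) ≤ 1 + (n + 1/2) * Real.log n - n := by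
    have h1 := Stirling.log_stirlingSeq'_antitone (Nat.zero_le (n - 1))
    simp only [Function.comp, Nat.succ_eq_add_one, Nat.sub_add_cancel hn, zero_add] at h1
    rw [Stirling.log_stirlingSeq_formula, Stirling.stirlingSeq_one,
      Real.log_div (Real.exp_pos 1).ne' (by positivity), Real.log_exp, Real.log_sqrt (by norm_num),
      Real.log_mul (by norm_num) hn0.ne', Real.log_div hn0.ne' (Real.exp_pos 1).ne',
      Real.log_exp] at h1
    linarith
  have h2pi : 0 ≤ Real.log (2 * π) := Real.log_nonneg (by nlinarith [Real.pi_gt_three])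
  have hlogadd : ∀ u : ℝ, 0 ≤ u → Real.log (n + u) ≤ Real.log n + u / n := by
    intro u hu
    have : Real.log ((n + u) / n) ≤ (n + u) / n - 1 := Real.log_le_sub_one_of_pos (by positivity)
    rw [Real.log_div (by positivity) hn0.ne'] at this
    have h3 : (n + u) / n - 1 = u / n := by field_simp; ring
    linarith
  constructor
  · have h1 := hlogadd t ht0
    have h2 : ((n:ℝ) + t + 1/2) * (t / n) ≤ 5/2 := by
      rw [mul_div_assoc', div_le_iff₀ hn0]
      nlinarith
    have h3 : ((n:ℝ) + t + 1/2) * Real.log (n + t) ≤ (n + t + 1/2) * (Real.log n + t / n) :=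
      mul_le_mul_of_nonneg_left h1 (by positivity)
    nlinarith
  · have h1 := hlogadd 1 zero_le_one
    have h2 : t * Real.log (n + 1) ≤ t * Real.log n + 1 := by
      have : (1:ℝ) / n ≤ 1 := by rw [div_le_iff₀ hn0]; linarith
      nlinarith
    have h3 : Real.log n ≤ Real.log (n + t) := Real.log_le_log hn0 (by linarith)
    have h4 : ((n:ℝ) + t + 1/2) * Real.log n ≤ (n + t + 1/2) * Real.log (n + t) :=
      mul_le_mul_of_nonneg_left h3 (by positivity)
    nlinarith

theorem sb_term (a : ℝ) (ha : 0 < a) (N y : ℝ) (hN : 1 ≤ a * N) (hN0 : 0 < N) (hy : 0 ≤ y) :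
    y ^ (a * N) / Real.Gamma (a * N + 1) ≤
      Real.exp (y * N + 3 - a * N * Real.log N - Real.log N / 2 - Real.log a / 2) := by
  have h1 : y ^ (a * N) ≤ Real.exp (a * N * Real.log a + y * N - a * N) := by
    have : y ≤ Real.exp (Real.log a + (y / a - 1)) := by
      rw [Real.exp_add, Real.exp_log ha]
      have := Real.add_one_le_exp (y / a - 1)
      calc y = a * (y / a) := by field_simp
        _ ≤ _ := mul_le_mul_of_nonneg_left (by linarith) ha.le
    calc y ^ (a * N) ≤ (Real.exp (Real.log a + (y / a - 1))) ^ (a * N) :=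
          Real.rpow_le_rpow hy this (by linarith)
      _ = _ := by
          rw [← Real.exp_mul]; congr 1; field_simp; ring
  have h2 : Real.exp ((a * N + 1/2) * Real.log (a * N) - a * N - 3) ≤ Real.Gamma (a * N + 1) := by
    rw [← Real.le_log_iff_exp_le (Real.Gamma_pos_of_pos (by linarith))]
    exact (sb_logGamma_bounds _ hN).1
  calc _ ≤ Real.exp (a * N * Real.log a + y * N - a * N) /
        Real.exp ((a * N + 1/2) * Real.log (a * N) - a * N - 3) := by
        gcongr
    _ = _ := by
        rw [← Real.exp_sub, Real.log_mul ha.ne' hN0.ne']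
        congr 1; ring

theorem sb_Gamma_top (d : ℕ) (N : ℝ) (hN : 1 ≤ N) :
    Real.Gamma (N + d + 1) ≤
      Real.exp ((N + d + 1/2) * Real.log N - N + 3 + d * (d + 3/2)) := by
  have hN0 : 0 < N := by linarith
  have hd : (0:ℝ) ≤ d := by positivity
  rw [← Real.log_le_iff_le_exp (Real.Gamma_pos_of_pos (by positivity))]
  have h := (sb_logGamma_bounds (N + d) (by linarith)).2
  have h1 : Real.log (N + d) ≤ Real.log N + d / N := by
    have : Real.log ((N + d) / N) ≤ (N + d) / N - 1 := Real.log_le_sub_one_of_pos (by positivity)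
    rw [Real.log_div (by positivity) hN0.ne'] at this
    have h3 : (N + d) / N - 1 = d / N := by field_simp; ring
    linarith
  have h2 : (N + d + 1/2) * ((d:ℝ) / N) ≤ d * (d + 3/2) := by
    rw [mul_div_assoc', div_le_iff₀ hN0]
    nlinarith [mul_nonneg hd (by linarith : 0 ≤ N - 1), mul_nonneg (mul_nonneg hd hd) (by linarith : 0 ≤ N - 1)]
  have h3 : (N + d + 1/2) * Real.log (N + d) ≤ (N + d + 1/2) * (Real.log N + d / N) :=
    mul_le_mul_of_nonneg_left h1 (by positivity)
  nlinarith

theorem sb_kappa_nonneg (d : ℕ) (s : Fin d → ℝ) (hs : s ∈ SdInt d) (b : ℝ) (hb : 0 < b)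
    (x : Fin d → ℝ) (hx : x ∈ Sd d) : 0 ≤ kappa d s b x := by
  have hs0 : ∀ i, 0 < s i := fun i => (hs.1 i).1
  have hx0 : ∀ i, 0 ≤ x i := fun i => (hx.1 i).1
  have hw : 0 < 1 - ∑ i, s i := by
    have := hs.2
    simp only [abs_of_pos (hs0 _)] at this
    linarith
  have hxs : 0 ≤ 1 - ∑ i, x i := by
    have := hx.2
    simp only [abs_of_nonneg (hx0 _)] at this
    linarith
  have hss : 0 ≤ ∑ i, (s i / b + 1) :=
    Finset.sum_nonneg fun i _ => by have := div_pos (hs0 i) hb; linarith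
  have hwb := div_pos hw hb
  unfold kappa dirK
  refine mul_nonneg (mul_nonneg (div_nonneg ?_ (mul_nonneg ?_ ?_)) ?_) ?_
  · exact (Real.Gamma_pos_of_pos (by linarith)).le
  · exact (Real.Gamma_pos_of_pos (by linarith)).le
  · exact Finset.prod_nonneg fun i _ =>
      (Real.Gamma_pos_of_pos (by have := div_pos (hs0 i) hb; linarith)).le
  · exact Real.rpow_nonneg hxs _
  · exact Finset.prod_nonneg fun i _ => Real.rpow_nonneg (hx0 i) _

theorem sb_kappa_bound (d : ℕ) (s : Fin d → ℝ) (hs : s ∈ SdInt d) :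
    ∃ C : ℝ, 0 < C ∧ ∃ b₀ : ℝ, 0 < b₀ ∧ ∀ b, 0 < b → b < b₀ → ∀ x ∈ Sd d,
      kappa d s b x ≤ C * b ^ (-(d:ℝ)/2) := by
  have hs0 : ∀ i, 0 < s i := fun i => (hs.1 i).1
  set w := 1 - ∑ i, s i with hwdef
  have hw : 0 < w := by
    have := hs.2
    simp only [abs_of_pos (hs0 _)] at this
    linarith
  refine ⟨Real.exp (6 + d * (d + 3/2) - Real.log w / 2 + ∑ i, (3 - Real.log (s i) / 2)),
    Real.exp_pos _, ?_⟩
  have hev : ∀ᶠ b : ℝ in 𝓝[>] 0, b ≤ 1 ∧ b ≤ w ∧ ∀ i, b ≤ s i := by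
    have h : ∀ c : ℝ, 0 < c → ∀ᶠ b : ℝ in 𝓝[>] 0, b ≤ c := fun c hc =>
      (eventually_le_nhds hc).filter_mono nhdsWithin_le_nhds
    exact (h 1 one_pos).and ((h w hw).and (eventually_all.2 fun i => h _ (hs0 i)))
  obtain ⟨b₀, hb₀, H⟩ := mem_nhdsGT_iff_exists_Ioo_subset.1 hev
  refine ⟨b₀, hb₀, fun b hb hbb x hx => ?_⟩
  obtain ⟨hb1, hbw, hbs⟩ := H ⟨hb, hbb⟩
  have hx0 : ∀ i, 0 ≤ x i := fun i => (hx.1 i).1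
  have hxs : 0 ≤ 1 - ∑ i, x i := by
    have := hx.2
    simp only [abs_of_nonneg (hx0 _)] at this
    linarith
  obtain ⟨N, hN⟩ : ∃ N, N = b⁻¹ := ⟨_, rfl⟩
  have hN0 : 0 < N := hN ▸ inv_pos.2 hb
  have hge : ∀ a, b ≤ a → 1 ≤ a * N := by
    intro a ha
    rw [hN, ← div_eq_mul_inv, le_div_iff₀ hb]; linarith
  have hN1 : 1 ≤ N := by have := hge 1 hb1; linarith
  have e1 : kappa d s b x = Real.Gamma (N + d + 1) *
      (((1 - ∑ i, x i) ^ (w * N) / Real.Gamma (w * N + 1)) *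
        ∏ i, ((x i) ^ (s i * N) / Real.Gamma (s i * N + 1))) := by
    unfold kappa dirK
    simp only [div_eq_mul_inv _ b, ← hN, ← hwdef, add_sub_cancel_right, Finset.prod_div_distrib]
    have : ∑ i, (s i * N + 1) + (w * N + 1) = N + d + 1 := by
      rw [Finset.sum_add_distrib, ← Finset.sum_mul]
      simp [hwdef]; ring
    rw [this, div_mul_div_comm, mul_assoc, div_mul_eq_mul_div, mul_div_assoc]
  rw [e1]
  have hG := sb_Gamma_top d N hN1
  have hW := sb_term w hw N _ (hge w hbw) hN0 hxs
  have hP : ∏ i, ((x i) ^ (s i * N) / Real.Gamma (s i * N + 1)) ≤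
      ∏ i, Real.exp (x i * N + 3 - s i * N * Real.log N - Real.log N / 2 - Real.log (s i) / 2) := by
    refine Finset.prod_le_prod (fun i _ => ?_) fun i _ => sb_term _ (hs0 i) N _ (hge _ (hbs i)) hN0 (hx0 i)
    exact div_nonneg (Real.rpow_nonneg (hx0 i) _)
      (Real.Gamma_pos_of_pos (by have := hge _ (hbs i); linarith)).le
  have hP0 : 0 ≤ ∏ i, ((x i) ^ (s i * N) / Real.Gamma (s i * N + 1)) :=
    Finset.prod_nonneg fun i _ => div_nonneg (Real.rpow_nonneg (hx0 i) _)
      (Real.Gamma_pos_of_pos (by have := hge _ (hbs i); linarith)).le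
  have hW0 : 0 ≤ (1 - ∑ i, x i) ^ (w * N) / Real.Gamma (w * N + 1) :=
    div_nonneg (Real.rpow_nonneg hxs _)
      (Real.Gamma_pos_of_pos (by have := hge _ hbw; linarith)).le
  calc _ ≤ _ := mul_le_mul hG (mul_le_mul hW hP hP0 (Real.exp_pos _).le)
        (mul_nonneg hW0 hP0) (Real.exp_pos _).le
    _ = _ := by
        rw [← Real.exp_sum, ← Real.exp_add, ← Real.exp_add,
          show b = Real.exp (- Real.log N) by
            rw [hN, Real.log_inv, neg_neg, Real.exp_log hb], ← Real.exp_mul, ← Real.exp_add]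
        congr 1
        simp only [Finset.sum_sub_distrib, Finset.sum_add_distrib, ← Finset.sum_mul,
          Finset.sum_const, Finset.card_univ, Fintype.card_fin, nsmul_eq_mul]
        rw [hwdef]; ring


theorem sb_layer {Ω : Type*} [MeasurableSpace Ω] (μ₁ μ₂ : Measure Ω) [IsFiniteMeasure μ₁]
    [IsFiniteMeasure μ₂] (g : Ω → ℝ) (hg : Measurable g) (M a : ℝ) (hM : 0 ≤ M)
    (h0 : ∀ ω, 0 ≤ g ω) (h1 : ∀ ω, g ω ≤ M)
    (h : ∀ t : ℝ, |μ₁.real {ω | t ≤ g ω} - μ₂.real {ω | t ≤ g ω}| ≤ a) :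
    |∫ ω, g ω ∂μ₁ - ∫ ω, g ω ∂μ₂| ≤ M * a := by
  have hint : ∀ (μ : Measure Ω) [IsFiniteMeasure μ], Integrable g μ := fun μ _ =>
    Integrable.of_bound hg.aestronglyMeasurable M
      (Eventually.of_forall fun ω => by rw [Real.norm_eq_abs, abs_of_nonneg (h0 ω)]; exact h1 ω)
  have hti : ∀ (μ : Measure Ω) [IsFiniteMeasure μ],
      IntegrableOn (fun t => μ.real {ω | t ≤ g ω}) (Set.Ioc 0 M) := by
    intro μ _
    have hanti : Antitone fun t : ℝ => μ.real {ω | t ≤ g ω} := fun t u htu =>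
      measureReal_mono fun ω (hω : u ≤ g ω) => htu.trans hω
    exact ((hanti.antitoneOn _).integrableOn_isCompact isCompact_Icc).mono_set
      Set.Ioc_subset_Icc_self
  rw [(hint μ₁).integral_eq_integral_Ioc_meas_le (Eventually.of_forall h0) (Eventually.of_forall h1),
    (hint μ₂).integral_eq_integral_Ioc_meas_le (Eventually.of_forall h0) (Eventually.of_forall h1),
    ← integral_sub (hti μ₁) (hti μ₂)]
  have := norm_setIntegral_le_of_norm_le_const (μ := volume) (s := Set.Ioc 0 M) (C := a)
    (f := fun t => μ₁.real {ω | t ≤ g ω} - μ₂.real {ω | t ≤ g ω}) (by simp)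
    (fun t _ => by simpa [Real.norm_eq_abs] using h t)
  rw [Real.norm_eq_abs] at this
  refine this.trans (le_of_eq ?_)
  rw [Real.volume_real_Ioc_of_le hM]; ring

theorem sb_cov {Ω : Type*} [MeasurableSpace Ω] (P : Measure Ω) [IsProbabilityMeasure P]
    (Y Z : Ω → ℝ) (hY : Measurable Y) (hZ : Measurable Z) (M a : ℝ) (hM : 0 ≤ M)
    (hY0 : ∀ ω, 0 ≤ Y ω) (hY1 : ∀ ω, Y ω ≤ M) (hZ0 : ∀ ω, 0 ≤ Z ω) (hZ1 : ∀ ω, Z ω ≤ M)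
    (h : ∀ t u : ℝ, |P.real ({ω | t ≤ Y ω} ∩ {ω | u ≤ Z ω}) -
      P.real {ω | t ≤ Y ω} * P.real {ω | u ≤ Z ω}| ≤ a) :
    |∫ ω, Y ω * Z ω ∂P - (∫ ω, Y ω ∂P) * ∫ ω, Z ω ∂P| ≤ M ^ 2 * a := by
  have hmY : ∀ t, MeasurableSet {ω | t ≤ Y ω} := fun t => measurableSet_le measurable_const hY
  have hmZ : ∀ t, MeasurableSet {ω | t ≤ Z ω} := fun t => measurableSet_le measurable_const hZ
  have hYi : Integrable Y P := Integrable.of_bound hY.aestronglyMeasurable M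
      (Eventually.of_forall fun ω => by rw [Real.norm_eq_abs, abs_of_nonneg (hY0 ω)]; exact hY1 ω)
  have step1 : ∀ u : ℝ, |∫ ω in {ω | u ≤ Z ω}, Y ω ∂P - P.real {ω | u ≤ Z ω} * ∫ ω, Y ω ∂P|
      ≤ M * a := by
    intro u
    haveI : IsFiniteMeasure ((P {ω | u ≤ Z ω}) • P) := Measure.smul_finite P (measure_ne_top _ _)
    have := sb_layer (P.restrict {ω | u ≤ Z ω}) ((P {ω | u ≤ Z ω}) • P) Y hY M a hM hY0 hY1 ?_
    · simpa [integral_smul_measure, measureReal_def] using this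
    · intro t
      have := h t u
      rw [measureReal_restrict_apply (hmY t), measureReal_ennreal_smul_apply, mul_comm]
      exact this
  have hfin : IsFiniteMeasure (P.withDensity fun ω => ENNReal.ofReal (Y ω)) :=
    isFiniteMeasure_withDensity_ofReal hYi.2
  have hY00 : 0 ≤ ∫ ω, Y ω ∂P := integral_nonneg hY0
  haveI : IsFiniteMeasure ((ENNReal.ofReal (∫ ω, Y ω ∂P)) • P) :=
    Measure.smul_finite P ENNReal.ofReal_ne_top
  have := sb_layer (P.withDensity fun ω => ENNReal.ofReal (Y ω))
    ((ENNReal.ofReal (∫ ω, Y ω ∂P)) • P) Z hZ M (M * a) hM hZ0 hZ1 ?_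
  · rw [integral_withDensity_eq_integral_toReal_smul (by fun_prop) (by simp)] at this
    rw [integral_smul_measure, ENNReal.toReal_ofReal hY00] at this
    simp only [ENNReal.toReal_ofReal (hY0 _), smul_eq_mul] at this
    rw [pow_two, mul_assoc]
    exact this
  · intro u
    have e : (P.withDensity fun ω => ENNReal.ofReal (Y ω)).real {ω | u ≤ Z ω}
        = ∫ ω in {ω | u ≤ Z ω}, Y ω ∂P := by
      rw [measureReal_def, withDensity_apply _ (hmZ u),
        integral_eq_lintegral_of_nonneg_ae (Eventually.of_forall hY0)
          hY.aestronglyMeasurable]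
    rw [e, measureReal_ennreal_smul_apply, ENNReal.toReal_ofReal hY00, mul_comm (∫ ω, Y ω ∂P)]
    exact step1 u

theorem sb_alpha {Ω : Type*} [MeasurableSpace Ω] (P : Measure Ω) [IsProbabilityMeasure P]
    {d : ℕ} (X : ℕ → Ω → (Fin d → ℝ)) (i j : ℕ) (hi : 1 ≤ i) (hij : i ≤ j)
    (A B : Set (Fin d → ℝ)) (hA : MeasurableSet A) (hB : MeasurableSet B) :
    |P.real (X i ⁻¹' A ∩ X j ⁻¹' B) - P.real (X i ⁻¹' A) * P.real (X j ⁻¹' B)|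
      ≤ alphaMix P X (j - i) := by
  unfold alphaMix
  refine le_csSup ⟨1, ?_⟩ ⟨i, hi, X i ⁻¹' A, X j ⁻¹' B, ?_, ?_, rfl⟩
  · rintro r ⟨k, hk, A, B, -, -, rfl⟩
    have h1 : 0 ≤ P.real (A ∩ B) := measureReal_nonneg
    have h2 : P.real (A ∩ B) ≤ 1 := measureReal_le_one
    have h3 : 0 ≤ P.real A := measureReal_nonneg
    have h4 : P.real A ≤ 1 := measureReal_le_one
    have h5 : 0 ≤ P.real B := measureReal_nonneg
    have h6 : P.real B ≤ 1 := measureReal_le_one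
    simp only [← measureReal_def]
    rw [abs_le]
    constructor <;> nlinarith [mul_nonneg h3 h5]
  · have : MeasurableSpace.comap (X i) inferInstance ≤
        ⨆ l ∈ Set.Icc 1 i, MeasurableSpace.comap (X l) inferInstance :=
      le_iSup₂_of_le i ⟨hi, le_rfl⟩ le_rfl
    exact this _ ⟨A, hA, rfl⟩
  · have : MeasurableSpace.comap (X j) inferInstance ≤
        ⨆ l ∈ Set.Ici (i + (j - i)), MeasurableSpace.comap (X l) inferInstance :=
      le_iSup₂_of_le j (by simp; omega) le_rfl
    exact this _ ⟨B, hB, rfl⟩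

theorem sb_kappa_meas (d : ℕ) (s : Fin d → ℝ) (b : ℝ) : Measurable (kappa d s b) := by
  unfold kappa dirK
  refine Measurable.mul (Measurable.mul measurable_const ?_) ?_
  · exact (measurable_const.sub (Finset.measurable_sum _ fun i _ => measurable_pi_apply i)).pow_const _
  · exact Finset.measurable_prod _ fun i _ => (measurable_pi_apply i).pow_const _

theorem sb_center {Ω : Type*} [MeasurableSpace Ω] (P : Measure Ω) [IsProbabilityMeasure P]
    (Y Z : Ω → ℝ) (hY : Integrable Y P) (hZ : Integrable Z P)
    (hYZ : Integrable (fun ω => Y ω * Z ω) P) :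
    Integrable (fun ω => (Y ω - ∫ ω', Y ω' ∂P) * (Z ω - ∫ ω', Z ω' ∂P)) P ∧
    ∫ ω, (Y ω - ∫ ω', Y ω' ∂P) * (Z ω - ∫ ω', Z ω' ∂P) ∂P =
      ∫ ω, Y ω * Z ω ∂P - (∫ ω, Y ω ∂P) * ∫ ω, Z ω ∂P := by
  obtain ⟨a, ha⟩ : ∃ a, a = ∫ ω, Y ω ∂P := ⟨_, rfl⟩
  obtain ⟨c, hc⟩ : ∃ c, c = ∫ ω, Z ω ∂P := ⟨_, rfl⟩
  rw [← ha, ← hc]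
  have e : (fun ω => (Y ω - a) * (Z ω - c)) = fun ω => Y ω * Z ω - c * Y ω - a * Z ω + a * c := by
    funext ω; ring
  have i1 : Integrable (fun ω => Y ω * Z ω - c * Y ω) P := hYZ.sub (hY.const_mul c)
  have i2 : Integrable (fun ω => Y ω * Z ω - c * Y ω - a * Z ω) P := i1.sub (hZ.const_mul a)
  rw [e]
  refine ⟨i2.add (integrable_const _), ?_⟩
  rw [integral_add i2 (integrable_const _), integral_sub i1 (hZ.const_mul a),
    integral_sub hYZ (hY.const_mul c), integral_const_mul, integral_const_mul, ← ha, ← hc]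
  simp only [integral_const, probReal_univ, one_smul]
  ring

theorem sb_Xi {Ω : Type*} [MeasurableSpace Ω] (P : Measure Ω) [IsProbabilityMeasure P]
    {d : ℕ} (X : ℕ → Ω → (Fin d → ℝ)) (hmeas : ∀ i, Measurable (X i)) (s : Fin d → ℝ) (b M : ℝ)
    (hM : 0 ≤ M) (h0 : ∀ i ω, 0 ≤ kappa d s b (X i ω)) (h1 : ∀ i ω, kappa d s b (X i ω) ≤ M)
    (i j : ℕ) (hi : 1 ≤ i) (hij : i ≤ j) :
    Integrable (fun ω => Xi P X s b i ω * Xi P X s b j ω) P ∧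
    |∫ ω, Xi P X s b i ω * Xi P X s b j ω ∂P| ≤ M ^ 2 * alphaMix P X (j - i) := by
  have hm : ∀ i, Measurable fun ω => kappa d s b (X i ω) := fun i =>
    (sb_kappa_meas d s b).comp (hmeas i)
  have hI : ∀ i, Integrable (fun ω => kappa d s b (X i ω)) P := fun i =>
    Integrable.of_bound (hm i).aestronglyMeasurable M
      (Eventually.of_forall fun ω => by rw [Real.norm_eq_abs, abs_of_nonneg (h0 i ω)]; exact h1 i ω)
  have hII : Integrable (fun ω => kappa d s b (X i ω) * kappa d s b (X j ω)) P :=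
    Integrable.of_bound ((hm i).mul (hm j)).aestronglyMeasurable (M * M)
      (Eventually.of_forall fun ω => by
        rw [Real.norm_eq_abs, abs_of_nonneg (mul_nonneg (h0 i ω) (h0 j ω))]
        exact mul_le_mul (h1 i ω) (h1 j ω) (h0 j ω) hM)
  have hc := sb_cov P (fun ω => kappa d s b (X i ω)) (fun ω => kappa d s b (X j ω)) (hm i) (hm j) M (alphaMix P X (j - i)) hM (h0 i) (h1 i) (h0 j) (h1 j)
    (fun t u => sb_alpha P X i j hi hij {x | t ≤ kappa d s b x} {x | u ≤ kappa d s b x}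
      (measurableSet_le measurable_const (sb_kappa_meas d s b))
      (measurableSet_le measurable_const (sb_kappa_meas d s b)))
  have hc2 := sb_center P (fun ω => kappa d s b (X i ω)) (fun ω => kappa d s b (X j ω)) (hI i) (hI j) hII
  refine ⟨hc2.1, ?_⟩
  have e := hc2.2
  unfold Xi
  rw [e]
  exact hc

theorem sb_gap (p q i j i' j' : ℕ) (hi : 1 ≤ i) (hij : i < j) (hi' : i' ∈ smallBlock p q i)
    (hj' : j' ∈ smallBlock p q j) : 1 ≤ i' ∧ i' ≤ j' ∧ (j - i) * p ≤ j' - i' := by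
  simp only [smallBlock, Finset.mem_Icc] at hi' hj'
  obtain ⟨l, rfl⟩ : ∃ l, j = i + l + 1 := ⟨j - i - 1, by omega⟩
  have e1 : i + l + 1 - 1 = i + l := by omega
  have e2 : i + l + 1 - i = l + 1 := by omega
  rw [e1] at hj'
  rw [e2]
  have h1 : (i + l) * (p + q) = i * (p + q) + l * p + l * q := by ring
  have h2 : (l + 1) * p = l * p + p := by ring
  rw [h1] at hj'
  rw [h2]
  have : 0 ≤ l * q := Nat.zero_le _
  omega

theorem sb_card (p q i : ℕ) (hi : 1 ≤ i) : (smallBlock p q i).card = q := by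
  obtain ⟨l, rfl⟩ : ∃ l, i = l + 1 := ⟨i - 1, by omega⟩
  simp only [smallBlock, Nat.card_Icc, Nat.add_sub_cancel]
  have : (l + 1) * (p + q) = l * (p + q) + p + q := by ring
  omega

theorem sb_pair {Ω : Type*} [MeasurableSpace Ω] (P : Measure Ω) [IsProbabilityMeasure P]
    {d : ℕ} (X : ℕ → Ω → (Fin d → ℝ)) (hmeas : ∀ i, Measurable (X i)) (s : Fin d → ℝ) (b M : ℝ)
    (hM : 0 ≤ M) (h0 : ∀ i ω, 0 ≤ kappa d s b (X i ω)) (h1 : ∀ i ω, kappa d s b (X i ω) ≤ M)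
    (p q i j : ℕ) (hi : 1 ≤ i) (hij : i < j) (a : ℝ)
    (ha : ∀ m, (j - i) * p ≤ m → alphaMix P X m ≤ a) :
    |∫ ω, (∑ i' ∈ smallBlock p q i, Xi P X s b i' ω) *
      (∑ j' ∈ smallBlock p q j, Xi P X s b j' ω) ∂P| ≤ (q : ℝ) ^ 2 * (M ^ 2 * a) := by
  have key : ∀ i' ∈ smallBlock p q i, ∀ j' ∈ smallBlock p q j,
      Integrable (fun ω => Xi P X s b i' ω * Xi P X s b j' ω) P ∧
      |∫ ω, Xi P X s b i' ω * Xi P X s b j' ω ∂P| ≤ M ^ 2 * a := by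
    intro i' hi' j' hj'
    obtain ⟨g1, g2, g3⟩ := sb_gap p q i j i' j' hi hij hi' hj'
    obtain ⟨k1, k2⟩ := sb_Xi P X hmeas s b M hM h0 h1 i' j' g1 g2
    exact ⟨k1, k2.trans (mul_le_mul_of_nonneg_left (ha _ g3) (sq_nonneg _))⟩
  simp only [Finset.sum_mul_sum]
  rw [integral_finsetSum _ fun i' hi' => integrable_finsetSum _ fun j' hj' => (key i' hi' j' hj').1]
  calc _ ≤ ∑ i' ∈ smallBlock p q i, |∫ ω, ∑ j' ∈ smallBlock p q j,
        Xi P X s b i' ω * Xi P X s b j' ω ∂P| := Finset.abs_sum_le_sum_abs _ _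
    _ ≤ ∑ i' ∈ smallBlock p q i, ∑ j' ∈ smallBlock p q j, M ^ 2 * a := by
        refine Finset.sum_le_sum fun i' hi' => ?_
        rw [integral_finsetSum _ fun j' hj' => (key i' hi' j' hj').1]
        exact (Finset.abs_sum_le_sum_abs _ _).trans
          (Finset.sum_le_sum fun j' hj' => (key i' hi' j' hj').2)
    _ = _ := by
        simp only [Finset.sum_const, sb_card p q i hi, sb_card p q j (by omega), nsmul_eq_mul]
        ring

/-- Cross-covariance sum of small-block sums `V_j`. -/
theorem small_block_cross_cov_sum {Ω : Type*} [MeasurableSpace Ω]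
    (P : Measure Ω) [IsProbabilityMeasure P] (d : ℕ) (hd : 1 ≤ d)
    (X : ℕ → Ω → (Fin d → ℝ)) (hmeas : ∀ i, Measurable (X i))
    (hval : ∀ i ω, X i ω ∈ Sd d)
    (hstat : IsStrictlyStationary P X)
    (f : (Fin d → ℝ) → ℝ)
    (hlaw : ∀ i : ℕ, 1 ≤ i →
      Measure.map (X i) P = volume.withDensity fun x => ENNReal.ofReal (f x))
    (hsupp : ∀ x, x ∉ Sd d → f x = 0)
    (ν : ℝ) (hν : 1 < ν)
    (hA3 : (fun m : ℕ => alphaMix P X m) =O[atTop] fun m : ℕ => (m : ℝ) ^ (-ν))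
    (s : Fin d → ℝ) (hs : s ∈ SdInt d)
    (b : ℕ → ℝ) (hbpos : ∀ n, 0 < b n) (hb0 : Tendsto b atTop (𝓝 0))
    (pn qn : ℕ → ℕ) (hpn : Tendsto pn atTop atTop) (hqn : Tendsto qn atTop atTop)
    (hpq1 : Tendsto (fun n : ℕ => (pn n : ℝ) / ((pn n : ℝ) + (qn n : ℝ))) atTop (𝓝 1)) :
    (fun n : ℕ =>
        ∑ j ∈ Finset.Icc 1 (n / (pn n + qn n)), ∑ i ∈ Finset.Ico 1 j,
          |∫ ω, (∑ i' ∈ smallBlock (pn n) (qn n) i, Xi P X s (b n) i' ω) *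
              (∑ j' ∈ smallBlock (pn n) (qn n) j, Xi P X s (b n) j' ω) ∂P|)
      =O[atTop]
      (fun n : ℕ => ((n / (pn n + qn n) : ℕ) : ℝ) *
        ((qn n : ℝ) * (b n) ^ (-(d : ℝ) / 2)) ^ 2 / ((pn n : ℝ) + (qn n : ℝ)) ^ ν) := by
  obtain ⟨C, hC, b₀, hb₀, hκ⟩ := sb_kappa_bound d s hs
  obtain ⟨K, hK0, hK⟩ := hA3.exists_pos
  obtain ⟨m₀, hm₀⟩ := eventually_atTop.1 hK.bound
  have hsum : Summable fun l : ℕ => (l : ℝ) ^ (-ν) :=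
    Real.summable_nat_rpow.2 (by linarith)
  set Z : ℝ := ∑' l : ℕ, (l : ℝ) ^ (-ν) with hZ
  refine IsBigO.of_bound (C ^ 2 * K * 2 ^ ν * Z) ?_
  filter_upwards [hb0.eventually (gt_mem_nhds hb₀), hpn.eventually_ge_atTop (max m₀ 1),
    hpq1.eventually (lt_mem_nhds (by norm_num : (1/2 : ℝ) < 1))] with n hbn hp hhalf
  have hp1 : 1 ≤ pn n := (le_max_right _ _).trans hp
  have hpm : m₀ ≤ pn n := (le_max_left _ _).trans hp
  have hp0 : (0:ℝ) < pn n := by exact_mod_cast hp1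
  have hq0 : (0:ℝ) ≤ qn n := by positivity
  have hpq : (0:ℝ) < pn n + qn n := by linarith
  rw [lt_div_iff₀ hpq] at hhalf
  have hB : 0 < b n ^ (-(d:ℝ)/2) := Real.rpow_pos_of_pos (hbpos n) _
  set M := C * b n ^ (-(d:ℝ)/2) with hMdef
  have hM : 0 ≤ M := by positivity
  have hpair : ∀ j ∈ Finset.Icc 1 (n / (pn n + qn n)), ∀ i ∈ Finset.Ico 1 j,
      |∫ ω, (∑ i' ∈ smallBlock (pn n) (qn n) i, Xi P X s (b n) i' ω) *
              (∑ j' ∈ smallBlock (pn n) (qn n) j, Xi P X s (b n) j' ω) ∂P| ≤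
      (qn n : ℝ) ^ 2 * M ^ 2 * K * 2 ^ ν * ((pn n : ℝ) + qn n) ^ (-ν) * ((j - i : ℕ) : ℝ) ^ (-ν) := by
    intro j hj i hi
    rw [Finset.mem_Ico] at hi
    have hl : 1 ≤ j - i := by omega
    have hl0 : (0:ℝ) < ((j - i : ℕ) : ℝ) := by exact_mod_cast hl
    refine (sb_pair P X hmeas s (b n) M hM
      (fun i ω => sb_kappa_nonneg d s hs _ (hbpos n) _ (hval i ω))
      (fun i ω => hκ _ (hbpos n) hbn _ (hval i ω)) (pn n) (qn n) i j hi.1 hi.2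
      (K * (((j - i : ℕ) : ℝ) * (((pn n : ℝ) + qn n) / 2)) ^ (-ν)) ?_).trans (le_of_eq ?_)
    · intro m hm
      have hmp : pn n ≤ m := le_trans (Nat.le_mul_of_pos_left _ hl) hm
      have h1 := hm₀ m (hpm.trans hmp)
      rw [Real.norm_eq_abs, Real.norm_eq_abs, abs_of_nonneg (Real.rpow_nonneg (Nat.cast_nonneg m) _)]
        at h1
      refine (le_abs_self _).trans (h1.trans (mul_le_mul_of_nonneg_left ?_ hK0.le))
      refine Real.rpow_le_rpow_of_nonpos (by positivity) ?_ (by linarith)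
      calc ((j - i : ℕ) : ℝ) * (((pn n : ℝ) + qn n) / 2) ≤ ((j - i : ℕ) : ℝ) * pn n :=
            mul_le_mul_of_nonneg_left (by linarith) hl0.le
        _ ≤ m := by exact_mod_cast hm
    · rw [Real.mul_rpow hl0.le (by positivity), Real.div_rpow hpq.le (by norm_num),
        Real.rpow_neg (by norm_num : (0:ℝ) ≤ 2), div_inv_eq_mul]
      ring
  set D := (qn n : ℝ) ^ 2 * M ^ 2 * K * 2 ^ ν * ((pn n : ℝ) + qn n) ^ (-ν) with hD
  have hD0 : 0 ≤ D := by positivity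
  have hinner : ∀ j : ℕ, ∑ i ∈ Finset.Ico 1 j, ((j - i : ℕ) : ℝ) ^ (-ν) ≤ Z := by
    intro j
    have : ∑ i ∈ Finset.Ico 1 j, ((j - i : ℕ) : ℝ) ^ (-ν) =
        ∑ l ∈ (Finset.Ico 1 j).image (fun i => j - i), (l : ℝ) ^ (-ν) := by
      rw [Finset.sum_image]
      intro x hx y hy hxy
      simp only [Finset.coe_Ico, Set.mem_Ico] at hx hy
      simp only at hxy
      omega
    rw [this]
    exact hsum.sum_le_tsum _ fun l _ => Real.rpow_nonneg (Nat.cast_nonneg l) _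
  have hle : ∑ j ∈ Finset.Icc 1 (n / (pn n + qn n)), ∑ i ∈ Finset.Ico 1 j,
          |∫ ω, (∑ i' ∈ smallBlock (pn n) (qn n) i, Xi P X s (b n) i' ω) *
              (∑ j' ∈ smallBlock (pn n) (qn n) j, Xi P X s (b n) j' ω) ∂P| ≤
      ((n / (pn n + qn n) : ℕ) : ℝ) * (D * Z) := by
    calc _ ≤ ∑ j ∈ Finset.Icc 1 (n / (pn n + qn n)), D * Z := by
          refine Finset.sum_le_sum fun j hj => ?_
          calc _ ≤ ∑ i ∈ Finset.Ico 1 j, D * ((j - i : ℕ) : ℝ) ^ (-ν) :=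
                Finset.sum_le_sum fun i hi => hpair j hj i hi
            _ ≤ _ := by
                rw [← Finset.mul_sum]
                exact mul_le_mul_of_nonneg_left (hinner j) hD0
      _ = _ := by
          rw [Finset.sum_const, Nat.card_Icc, nsmul_eq_mul, Nat.add_sub_cancel]
  rw [Real.norm_eq_abs, abs_of_nonneg (Finset.sum_nonneg fun j _ => Finset.sum_nonneg fun i _ =>
    abs_nonneg _), Real.norm_eq_abs, abs_of_nonneg (by positivity)]
  refine hle.trans (le_of_eq ?_)
  rw [hD, hMdef, Real.rpow_neg hpq.le]
  ring
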